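/- Let q(·) ∈ C^log(Q_p^n) with q(·) ∈ P(Q_p^n), and let q'(·) be the pointwise conjugate exponent, 1/q(x) + 1/q'(x) = 1. Then there is a constant C > 0 such that for every ball B = B_γ(x) ⊆ Q_p^n, |B|_h^{−1} ‖χ_B‖_{L^{q(·)}(Q_p^n)} ‖χ_B‖_{L^{q'(·)}(Q_p^n)} ≤ C. -/

import Mathlib

open MeasureTheory ENNReal

noncomputable section

variable {p : ℕ} [Fact p.Prime] {n : ℕ}

/-- The `p`-adic ball `B_γ(x) = {y : ‖y - x‖ ≤ p^γ}` in `ℚ_p^n`. -/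
def pBall (x : Fin n → ℚ_[p]) (γ : ℤ) : Set (Fin n → ℚ_[p]) :=
  Metric.closedBall x ((p : ℝ) ^ γ)

variable [MeasurableSpace (Fin n → ℚ_[p])]

/-- The `p`-adic fractional maximal function `M_α^p f` (with values in `ℝ≥0∞`). -/
def fracMax (μ : Measure (Fin n → ℚ_[p])) (α : ℝ) (f : (Fin n → ℚ_[p]) → ℝ)
    (x : Fin n → ℚ_[p]) : ℝ≥0∞ :=
  ⨆ γ : ℤ, μ (pBall x γ) ^ (α / (n : ℝ) - 1) * ∫⁻ y in pBall x γ, (‖f y‖₊ : ℝ≥0∞) ∂μ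

/-- The fractional maximal function `M_{α,B*}^p f` restricted to a fixed ball `B*`. -/
def fracMaxOn (μ : Measure (Fin n → ℚ_[p])) (α : ℝ) (B : Set (Fin n → ℚ_[p]))
    (f : (Fin n → ℚ_[p]) → ℝ) (x : Fin n → ℚ_[p]) : ℝ≥0∞ :=
  ⨆ (γ : ℤ), ⨆ (_ : pBall x γ ⊆ B),
    μ (pBall x γ) ^ (α / (n : ℝ) - 1) * ∫⁻ y in pBall x γ, (‖f y‖₊ : ℝ≥0∞) ∂μ

/-- The maximal commutator `M_{α,b}^p f`. -/
def maxComm (μ : Measure (Fin n → ℚ_[p])) (α : ℝ) (b f : (Fin n → ℚ_[p]) → ℝ)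
    (x : Fin n → ℚ_[p]) : ℝ≥0∞ :=
  ⨆ γ : ℤ, μ (pBall x γ) ^ (α / (n : ℝ) - 1) *
    ∫⁻ y in pBall x γ, (‖b x - b y‖₊ : ℝ≥0∞) * (‖f y‖₊ : ℝ≥0∞) ∂μ

/-- The nonlinear commutator `[b, M_α^p] f = b · M_α^p f - M_α^p (b f)`. -/
def nlComm (μ : Measure (Fin n → ℚ_[p])) (α : ℝ) (b f : (Fin n → ℚ_[p]) → ℝ)
    (x : Fin n → ℚ_[p]) : ℝ :=
  b x * (fracMax μ α f x).toReal - (fracMax μ α (fun y => b y * f y) x).toReal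

/-- Membership in the `p`-adic Lipschitz space `Λ_β`. -/
def MemLipschitz (β : ℝ) (f : (Fin n → ℚ_[p]) → ℝ) : Prop :=
  ∃ C : ℝ, 0 ≤ C ∧ ∀ x y, |f x - f y| ≤ C * ‖x - y‖ ^ β

/-- The `p`-adic Lipschitz norm `‖f‖_{Λ_β}`. -/
def lipNorm (β : ℝ) (f : (Fin n → ℚ_[p]) → ℝ) : ℝ :=
  sSup {r : ℝ | ∃ x y : Fin n → ℚ_[p], x ≠ y ∧ r = |f x - f y| / ‖x - y‖ ^ β}

/-- The average `b_B` of `b` over a set `B`. -/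
def avg (μ : Measure (Fin n → ℚ_[p])) (B : Set (Fin n → ℚ_[p]))
    (b : (Fin n → ℚ_[p]) → ℝ) : ℝ :=
  (μ B).toReal⁻¹ * ∫ y in B, b y ∂μ

/-- The Luxemburg norm of an `ℝ≥0∞`-valued function. -/
def luxNormE (μ : Measure (Fin n → ℚ_[p])) (q : (Fin n → ℚ_[p]) → ℝ)
    (g : (Fin n → ℚ_[p]) → ℝ≥0∞) : ℝ≥0∞ :=
  sInf {η : ℝ≥0∞ | 0 < η ∧ η < ⊤ ∧ ∫⁻ x, (g x / η) ^ q x ∂μ ≤ 1}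

/-- The Luxemburg norm `‖f‖_{L^{q(·)}}` of a real-valued function. -/
def luxNorm (μ : Measure (Fin n → ℚ_[p])) (q : (Fin n → ℚ_[p]) → ℝ)
    (f : (Fin n → ℚ_[p]) → ℝ) : ℝ≥0∞ :=
  luxNormE μ q fun x => (‖f x‖₊ : ℝ≥0∞)

/-- The class `P(ℚ_p^n)` of variable exponents: `1 < r₋ ≤ r₊ < ∞`. -/
def IsPExp (μ : Measure (Fin n → ℚ_[p])) (r : (Fin n → ℚ_[p]) → ℝ) : Prop :=
  Measurable r ∧ (∀ x, 1 ≤ r x) ∧ 1 < essInf r μ ∧ ∃ M : ℝ, ∀ᵐ x ∂μ, r x ≤ M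

/-- The class `C^log(ℚ_p^n)` of globally log-Hölder continuous variable exponents. -/
def IsLogHolder (μ : Measure (Fin n → ℚ_[p])) (r : (Fin n → ℚ_[p]) → ℝ) : Prop :=
  Measurable r ∧ (∀ x, 1 ≤ r x) ∧
    ∃ C : ℝ, 0 ≤ C ∧
      (∀ (γ : ℤ) (x : Fin n → ℚ_[p]),
        (γ : ℝ) * (essInf r (μ.restrict (pBall x γ)) - essSup r (μ.restrict (pBall x γ))) ≤ C) ∧
      ∀ x y : Fin n → ℚ_[p], |r x - r y| ≤ C / Real.logb p ((p : ℝ) + min ‖x‖ ‖y‖)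

/-- The set of values whose supremum is the `lip_β^q` norm. -/
def lipqSet (μ : Measure (Fin n → ℚ_[p])) (β q : ℝ) (f : (Fin n → ℚ_[p]) → ℝ) : Set ℝ :=
  {r : ℝ | ∃ (x : Fin n → ℚ_[p]) (γ : ℤ),
    r = (μ (pBall x γ)).toReal ^ (-(β / (n : ℝ))) *
      ((μ (pBall x γ)).toReal⁻¹ * ∫ y in pBall x γ, |f y - avg μ (pBall x γ) f| ^ q ∂μ) ^ (1 / q)}

/-!
The reciprocal exponent `1/q` oscillates on a ball `B = B_γ(x)` by at most a constant over `|γ|`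
when `γ < 0`, and at infinity it approaches a limit `v` at logarithmic speed.

If `|B| ≤ 1` and `a ≤ 1/q ≤ b` on `B`, then `‖χ_B‖_q ≤ |B|^a` and `‖χ_B‖_{q'} ≤ |B|^(1 - b)`, so
the quantity to bound is at most `|B|^(-(b - a))`, and `|B|` is at least of order `p^(nγ)`.

If `|B| ≥ 1`, then `‖χ_B‖_q ≤ A |B|^v` and `‖χ_B‖_{q'} ≤ A' |B|^(1 - v)`. For this, write
`|1/q(y) - v| ≤ δ(y) = C / log_p (p + |y|)`. Comparing `|B|^δ(y)` with a constant `K` gives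
`(K |B|^v)^(-q(y)) ≤ max(|B|⁻¹, K^(-1/δ(y)))`, and for `K = p^(C(n+1))` the second term is
`(p + |y|)^(-(n+1))`, which is integrable.
-/

section RealEstimates

-- One-dimensional Helly: the intervals `[f x - φ x, f x + φ x]` meet pairwise, so share a point.
lemma exists_forall_abs_sub_le {X : Type*} {f φ : X → ℝ} (h : ∀ x y, |f x - f y| ≤ φ x + φ y) :
    ∃ c, ∀ x, |f x - c| ≤ φ x := by
  refine ⟨⨆ x, (f x - φ x), fun x => ?_⟩
  have : Nonempty X := ⟨x⟩
  have hle (y z : X) : f y - φ y ≤ f z + φ z := by linarith [le_abs_self (f y - f z), h y z]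
  have hlower : f x - φ x ≤ ⨆ y, (f y - φ y) :=
    le_ciSup ⟨f x + φ x, Set.forall_mem_range.2 fun y => hle y x⟩ x
  have hupper : ⨆ y, (f y - φ y) ≤ f x + φ x := ciSup_le fun y => hle y x
  exact abs_sub_le_iff.2 ⟨by linarith, by linarith⟩

lemma exists_mem_Icc_forall_abs_sub_le {X : Type*} {f φ : X → ℝ} {a b : ℝ} (hab : a ≤ b)
    (hf : ∀ x, f x ∈ Set.Icc a b) (h : ∀ x y, |f x - f y| ≤ φ x + φ y) :
    ∃ c ∈ Set.Icc a b, ∀ x, |f x - c| ≤ φ x := by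
  obtain ⟨c, hc⟩ := exists_forall_abs_sub_le h
  refine ⟨Set.projIcc a b hab c, Subtype.coe_prop _, fun x => le_trans ?_ (hc x)⟩
  simpa only [Set.projIcc_of_mem hab (hf x)] using
    Set.abs_projIcc_sub_projIcc (c := f x) (d := c) hab

lemma abs_inv_sub_inv_le_abs_sub {a b : ℝ} (ha : 1 ≤ a) (hb : 1 ≤ b) :
    |a⁻¹ - b⁻¹| ≤ |a - b| := by
  rw [inv_sub_inv (by positivity) (by positivity), abs_div, abs_sub_comm b a]
  refine div_le_self (abs_nonneg _) ?_
  rw [abs_of_pos (by positivity)]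
  exact one_le_mul_of_one_le_of_one_le ha hb

lemma rpow_mul_rpow_neg_inv_div_logb {b C r t : ℝ} (hb : 1 < b) (hC : C ≠ 0) (ht : 0 < t) :
    (b ^ (C * r)) ^ (-(C / Real.logb b t)⁻¹) = t ^ (-r) := by
  have hb0 : 0 < b := zero_lt_one.trans hb
  calc (b ^ (C * r)) ^ (-(C / Real.logb b t)⁻¹) = b ^ (Real.logb b t * -r) := by
        rw [← Real.rpow_mul hb0.le]
        congr 1
        field_simp
    _ = t ^ (-r) := by rw [Real.rpow_mul hb0.le, Real.rpow_logb hb0 hb.ne' ht]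

end RealEstimates

section ENNRealPower

lemma mul_rpow_rpow_neg_le_max {b K : ℝ≥0∞} {s v δ : ℝ} (hb : 1 ≤ b) (hK : 1 ≤ K) (hs : 0 < s)
    (hv : 0 ≤ v) (hδ : 0 < δ) (h : s⁻¹ ≤ v + δ) :
    (K * b ^ v) ^ (-s) ≤ max b⁻¹ (K ^ (-δ⁻¹)) := by
  have of_rpow_le {c : ℝ≥0∞} (hc : c ^ s⁻¹ ≤ K * b ^ v) : (K * b ^ v) ^ (-s) ≤ c⁻¹ := by
    rw [ENNReal.rpow_neg, ENNReal.inv_le_inv]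
    simpa only [ENNReal.rpow_inv_rpow hs.ne'] using ENNReal.rpow_le_rpow hc hs.le
  rcases le_total (b ^ δ) K with hbK | hKb
  · refine le_max_of_le_left (of_rpow_le ?_)
    calc b ^ s⁻¹ ≤ b ^ (v + δ) := ENNReal.rpow_le_rpow_of_exponent_le hb h
      _ = b ^ δ * b ^ v := by rw [ENNReal.rpow_add_of_nonneg _ _ hv hδ.le, mul_comm]
      _ ≤ K * b ^ v := by gcongr
  · refine le_max_of_le_right ?_
    rw [ENNReal.rpow_neg K]
    refine of_rpow_le ?_
    have hKb' : K ^ δ⁻¹ ≤ b := by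
      simpa only [ENNReal.rpow_rpow_inv hδ.ne'] using
        ENNReal.rpow_le_rpow hKb (inv_nonneg.2 hδ.le)
    calc (K ^ δ⁻¹) ^ s⁻¹ ≤ (K ^ δ⁻¹) ^ (δ + v) :=
          ENNReal.rpow_le_rpow_of_exponent_le (ENNReal.one_le_rpow hK (inv_pos.2 hδ))
            (by linarith)
      _ = K * (K ^ δ⁻¹) ^ v := by
          rw [ENNReal.rpow_add_of_nonneg _ _ hδ.le hv, ENNReal.rpow_inv_rpow hδ.ne']
      _ ≤ K * b ^ v := by gcongr

lemma ofReal_mul_rpow_rpow_neg_le_inv_add {a C r s t v : ℝ} {b : ℝ≥0∞} (ha : 1 < a)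
    (hC : 0 < C) (hr : 0 ≤ r) (ht : 1 < t) (hb : 1 ≤ b) (hs : 0 < s) (hv : 0 ≤ v)
    (h : s⁻¹ ≤ v + C / Real.logb a t) :
    (ENNReal.ofReal (a ^ (C * r)) * b ^ v) ^ (-s) ≤ b⁻¹ + ENNReal.ofReal (t ^ (-r)) := by
  have hK : 1 ≤ ENNReal.ofReal (a ^ (C * r)) :=
    ENNReal.one_le_ofReal.2 (Real.one_le_rpow ha.le (by positivity))
  calc (ENNReal.ofReal (a ^ (C * r)) * b ^ v) ^ (-s)
      ≤ max b⁻¹ (ENNReal.ofReal (a ^ (C * r)) ^ (-(C / Real.logb a t)⁻¹)) :=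
        mul_rpow_rpow_neg_le_max hb hK hs hv (div_pos hC (Real.logb_pos ha ht)) h
    _ = max b⁻¹ (ENNReal.ofReal (t ^ (-r))) := by
        rw [ENNReal.ofReal_rpow_of_pos (by positivity),
          rpow_mul_rpow_neg_inv_div_logb ha hC.ne' (zero_lt_one.trans ht)]
    _ ≤ b⁻¹ + ENNReal.ofReal (t ^ (-r)) := max_le le_self_add le_add_self

end ENNRealPower

section Balls

lemma exists_norm_sub_digit_mul_zpow_le {z : ℚ_[p]} {γ : ℤ} (hz : ‖z‖ ≤ (p : ℝ) ^ (γ + 1)) :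
    ∃ d : Fin p, ‖z - (d : ℕ) * (p : ℚ_[p]) ^ (-(γ + 1))‖ ≤ (p : ℝ) ^ γ := by
  have hp : (0 : ℝ) < p := by exact_mod_cast (Fact.out : p.Prime).pos
  have hp' : (p : ℚ_[p]) ≠ 0 := by exact_mod_cast (Fact.out : p.Prime).ne_zero
  have hu : ‖z * (p : ℚ_[p]) ^ (γ + 1)‖ ≤ 1 := by
    rw [norm_mul, Padic.norm_p_zpow, zpow_neg, ← div_eq_mul_inv]
    exact div_le_one_of_le₀ hz (by positivity)
  let u : ℤ_[p] := ⟨_, hu⟩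
  have hdigit : ‖z * (p : ℚ_[p]) ^ (γ + 1) - u.zmodRepr‖ ≤ (p : ℝ) ^ (-1 : ℤ) :=
    (Padic.norm_le_pow_iff_norm_lt_pow_add_one _ _).2 (by
      simpa only [PadicInt.norm_def, PadicInt.coe_sub, PadicInt.coe_natCast, neg_add_cancel,
        zpow_zero] using u.norm_sub_zmodRepr_lt_one)
  have hnorm : ‖(p : ℚ_[p]) ^ (-(γ + 1))‖ = (p : ℝ) ^ (γ + 1) := by
    rw [Padic.norm_p_zpow, neg_neg]
  refine ⟨⟨u.zmodRepr, u.zmodRepr_lt_p⟩, ?_⟩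
  calc ‖z - (u.zmodRepr : ℕ) * (p : ℚ_[p]) ^ (-(γ + 1))‖
      = ‖z * (p : ℚ_[p]) ^ (γ + 1) - u.zmodRepr‖ * (p : ℝ) ^ (γ + 1) := by
        rw [← hnorm, ← norm_mul, sub_mul, mul_assoc, ← zpow_add₀ hp', add_neg_cancel, zpow_zero,
          mul_one]
    _ ≤ (p : ℝ) ^ (-1 : ℤ) * (p : ℝ) ^ (γ + 1) := by gcongr
    _ = (p : ℝ) ^ γ := by rw [← zpow_add₀ hp.ne']; congr 1; ring

omit [MeasurableSpace (Fin n → ℚ_[p])] in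
lemma pBall_succ_subset_iUnion (x : Fin n → ℚ_[p]) (γ : ℤ) :
    pBall x (γ + 1) ⊆ ⋃ d : Fin n → Fin p,
      pBall (fun i => x i + (d i : ℕ) * (p : ℚ_[p]) ^ (-(γ + 1))) γ := by
  intro y hy
  rw [pBall, Metric.mem_closedBall, dist_pi_le_iff (by positivity)] at hy
  choose d hd using fun i => exists_norm_sub_digit_mul_zpow_le (dist_eq_norm (y i) (x i) ▸ hy i)
  refine Set.mem_iUnion.2 ⟨d, ?_⟩
  rw [pBall, Metric.mem_closedBall, dist_pi_le_iff (by positivity)]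
  intro i
  rw [dist_eq_norm, ← sub_sub]
  exact hd i

omit [MeasurableSpace (Fin n → ℚ_[p])] in
lemma pBall_mono (x : Fin n → ℚ_[p]) : Monotone (pBall x) := fun _ _ h =>
  Metric.closedBall_subset_closedBall
    (zpow_le_zpow_right₀ (by exact_mod_cast (Fact.out : p.Prime).one_le) h)

variable (μ : Measure (Fin n → ℚ_[p]))

lemma measure_pBall_ne_zero [μ.IsOpenPosMeasure] (x : Fin n → ℚ_[p]) (γ : ℤ) : μ (pBall x γ) ≠ 0 :=
  (Metric.measure_closedBall_pos μ x
    (zpow_pos (by exact_mod_cast (Fact.out : p.Prime).pos) γ)).ne'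

lemma measure_pBall_ne_top [IsFiniteMeasureOnCompacts μ] (x : Fin n → ℚ_[p]) (γ : ℤ) :
    μ (pBall x γ) ≠ ⊤ :=
  measure_closedBall_lt_top.ne

variable [μ.IsAddLeftInvariant]

open scoped Pointwise in
lemma measure_pBall_center_eq (x y : Fin n → ℚ_[p]) (γ : ℤ) : μ (pBall x γ) = μ (pBall y γ) := by
  have : pBall x γ = (x - y) +ᵥ pBall y γ := by simp [pBall, Metric.vadd_closedBall]
  rw [this, measure_vadd]

lemma measure_pBall_succ_le (x : Fin n → ℚ_[p]) (γ : ℤ) :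
    μ (pBall x (γ + 1)) ≤ (p : ℝ≥0∞) ^ n * μ (pBall x γ) := by
  calc μ (pBall x (γ + 1)) ≤ ∑ d : Fin n → Fin p, μ (pBall _ γ) :=
        (measure_mono (pBall_succ_subset_iUnion x γ)).trans (measure_iUnion_fintype_le μ _)
    _ = (p : ℝ≥0∞) ^ n * μ (pBall x γ) := by
        simp [fun y => measure_pBall_center_eq μ y x γ]

lemma measure_pBall_add_nat_le (x : Fin n → ℚ_[p]) (γ : ℤ) (k : ℕ) :
    μ (pBall x (γ + k)) ≤ ((p : ℝ≥0∞) ^ n) ^ k * μ (pBall x γ) := by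
  induction k with
  | zero => simp
  | succ k ih =>
    calc μ (pBall x (γ + (k + 1 : ℕ))) = μ (pBall x (γ + k + 1)) := by push_cast; rw [add_assoc]
      _ ≤ (p : ℝ≥0∞) ^ n * μ (pBall x (γ + k)) := measure_pBall_succ_le μ x _
      _ ≤ (p : ℝ≥0∞) ^ n * (((p : ℝ≥0∞) ^ n) ^ k * μ (pBall x γ)) := by gcongr
      _ = ((p : ℝ≥0∞) ^ n) ^ (k + 1) * μ (pBall x γ) := by rw [pow_succ', mul_assoc]

lemma inv_measure_pBall_le (x : Fin n → ℚ_[p]) (γ : ℤ) :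
    (μ (pBall x γ))⁻¹ ≤ ((p : ℝ≥0∞) ^ n) ^ (-γ).toNat * (μ (pBall 0 0))⁻¹ := by
  have hp : (p : ℝ≥0∞) ≠ 0 := by exact_mod_cast (Fact.out : p.Prime).ne_zero
  rw [← inv_inv (((p : ℝ≥0∞) ^ n) ^ (-γ).toNat), ← ENNReal.mul_inv (by simp) (by simp [hp]),
    ENNReal.inv_le_inv, mul_comm, ← div_eq_mul_inv]
  refine ENNReal.div_le_of_le_mul' ?_
  calc μ (pBall 0 0) = μ (pBall x 0) := measure_pBall_center_eq μ 0 x 0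
    _ ≤ μ (pBall x (γ + (-γ).toNat)) := measure_mono (pBall_mono x (by lia))
    _ ≤ ((p : ℝ≥0∞) ^ n) ^ (-γ).toNat * μ (pBall x γ) := measure_pBall_add_nat_le μ x γ _

lemma measure_pBall_rpow_neg_le (x : Fin n → ℚ_[p]) (γ : ℤ) {θ L : ℝ} (hθ : θ ∈ Set.Icc 0 1)
    (hL : 0 ≤ L) (hγθ : -γ * θ ≤ L) :
    μ (pBall x γ) ^ (-θ) ≤ ((p : ℝ≥0∞) ^ n) ^ L * (1 + (μ (pBall 0 0))⁻¹) := by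
  have hp : (1 : ℝ≥0∞) ≤ p := by exact_mod_cast (Fact.out : p.Prime).one_le
  have hexponent : (-γ).toNat * θ ≤ L := by
    rcases le_total (-γ) 0 with h | h
    · simpa [Int.toNat_of_nonpos h] using hL
    · rwa [← Int.cast_natCast, Int.toNat_of_nonneg h, Int.cast_neg]
  calc μ (pBall x γ) ^ (-θ) = (μ (pBall x γ))⁻¹ ^ θ := by
        rw [ENNReal.rpow_neg, ENNReal.inv_rpow]
    _ ≤ (((p : ℝ≥0∞) ^ n) ^ (-γ).toNat * (1 + (μ (pBall 0 0))⁻¹)) ^ θ :=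
        ENNReal.rpow_le_rpow ((inv_measure_pBall_le μ x γ).trans (by gcongr; exact le_add_self))
          hθ.1
    _ = ((p : ℝ≥0∞) ^ n) ^ ((-γ).toNat * θ) * (1 + (μ (pBall 0 0))⁻¹) ^ θ := by
        rw [ENNReal.mul_rpow_of_nonneg _ _ hθ.1, ENNReal.rpow_natCast_mul]
    _ ≤ ((p : ℝ≥0∞) ^ n) ^ L * (1 + (μ (pBall 0 0))⁻¹) := by
        gcongr
        · exact one_le_pow₀ hp
        · simpa only [ENNReal.rpow_one] using
            ENNReal.rpow_le_rpow_of_exponent_le le_self_add hθ.2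

omit [MeasurableSpace (Fin n → ℚ_[p])] in
lemma ofReal_one_add_norm_rpow_neg_le_tsum_indicator {r : ℝ} (hr : 0 ≤ r) (y : Fin n → ℚ_[p]) :
    ENNReal.ofReal ((1 + ‖y‖) ^ (-r)) ≤
      ∑' k : ℕ, (pBall 0 (1 + k)).indicator (fun _ => ENNReal.ofReal ((p : ℝ) ^ (-r)) ^ k) y := by
  have hp : (1 : ℝ) < p := by exact_mod_cast (Fact.out : p.Prime).one_lt
  obtain ⟨k, hle, hlt⟩ := exists_nat_pow_near (le_add_of_nonneg_right (norm_nonneg y)) hp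
  have hy : y ∈ pBall (0 : Fin n → ℚ_[p]) (1 + k) := by
    rw [pBall, mem_closedBall_zero_iff, add_comm, ← Nat.cast_one, ← Nat.cast_add, zpow_natCast]
    linarith
  refine le_trans ?_ (ENNReal.le_tsum k)
  rw [Set.indicator_of_mem hy, ← ENNReal.ofReal_pow (by positivity),
    Real.rpow_pow_comm (by positivity)]
  exact ENNReal.ofReal_le_ofReal
    (Real.rpow_le_rpow_of_nonpos (by positivity) hle (neg_nonpos.2 hr))

variable [BorelSpace (Fin n → ℚ_[p])]

lemma measurableSet_pBall (x : Fin n → ℚ_[p]) (γ : ℤ) : MeasurableSet (pBall x γ) :=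
  Metric.isClosed_closedBall.measurableSet

lemma lintegral_one_add_norm_rpow_neg_lt_top [IsFiniteMeasureOnCompacts μ] {r : ℝ}
    (hr : n < r) : ∫⁻ y, ENNReal.ofReal ((1 + ‖y‖) ^ (-r)) ∂μ < ⊤ := by
  have hp : (1 : ℝ) < p := by exact_mod_cast (Fact.out : p.Prime).one_lt
  have hr0 : 0 ≤ r := (Nat.cast_nonneg n).trans hr.le
  set t : ℝ≥0∞ := ENNReal.ofReal ((p : ℝ) ^ (-r))
  have hratio : t * (p : ℝ≥0∞) ^ n < 1 := by
    rw [← ENNReal.ofReal_natCast p, ← ENNReal.ofReal_pow (by positivity),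
      ← ENNReal.ofReal_mul (by positivity), ← Real.rpow_natCast, ← Real.rpow_add (by positivity),
      ENNReal.ofReal_lt_one]
    exact Real.rpow_lt_one_of_one_lt_of_neg hp (by linarith)
  calc ∫⁻ y, ENNReal.ofReal ((1 + ‖y‖) ^ (-r)) ∂μ
      ≤ ∫⁻ y, ∑' k : ℕ, (pBall 0 (1 + k)).indicator (fun _ => t ^ k) y ∂μ :=
        lintegral_mono (ofReal_one_add_norm_rpow_neg_le_tsum_indicator hr0)
    _ = ∑' k : ℕ, t ^ k * μ (pBall 0 (1 + k)) := by
        rw [lintegral_tsum fun k =>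
          (measurable_const.indicator (measurableSet_pBall _ _)).aemeasurable]
        simp_rw [lintegral_indicator_const (measurableSet_pBall _ _)]
    _ ≤ ∑' k : ℕ, (t * (p : ℝ≥0∞) ^ n) ^ k * μ (pBall 0 1) := by
        refine ENNReal.tsum_le_tsum fun k => ?_
        rw [mul_pow, mul_assoc]
        gcongr
        exact measure_pBall_add_nat_le μ 0 1 k
    _ = (1 - t * (p : ℝ≥0∞) ^ n)⁻¹ * μ (pBall 0 1) := by
        rw [ENNReal.tsum_mul_right, ENNReal.tsum_geometric]
    _ < ⊤ := ENNReal.mul_lt_top (ENNReal.inv_lt_top.2 (tsub_pos_of_lt hratio))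
        (measure_pBall_ne_top μ 0 1).lt_top

end Balls

section LuxemburgNorm

variable {μ : Measure (Fin n → ℚ_[p])} {s : (Fin n → ℚ_[p]) → ℝ} {B : Set (Fin n → ℚ_[p])}

lemma luxNorm_indicator_one_le_mul (hB : MeasurableSet B) {A η : ℝ≥0∞} (hA : 1 ≤ A)
    (hA_top : A ≠ ⊤) (hη : η ≠ 0) (hη_top : η ≠ ⊤) (hs : ∀ᵐ y ∂μ, 1 ≤ s y)
    (h : ∫⁻ y in B, η ^ (-s y) ∂μ ≤ A) :
    luxNorm μ s (B.indicator fun _ => (1 : ℝ)) ≤ A * η := by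
  have hA0 : A ≠ 0 := (zero_lt_one.trans_le hA).ne'
  refine sInf_le ⟨ENNReal.mul_pos hA0 hη, ENNReal.mul_lt_top hA_top.lt_top hη_top.lt_top, ?_⟩
  calc ∫⁻ y, (‖B.indicator (fun _ => (1 : ℝ)) y‖₊ / (A * η)) ^ s y ∂μ
      ≤ ∫⁻ y, B.indicator (fun y => A⁻¹ * η ^ (-s y)) y ∂μ := by
        refine lintegral_mono_ae (hs.mono fun y hy => ?_)
        by_cases hyB : y ∈ B
        · simp only [hyB, Set.indicator_of_mem, nnnorm_one, ENNReal.coe_one, one_div]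
          rw [ENNReal.inv_rpow, ← ENNReal.rpow_neg, ENNReal.mul_rpow_of_ne_top hA_top hη_top,
            ← ENNReal.rpow_neg_one A]
          gcongr
        · simp [hyB, zero_lt_one.trans_le hy]
    _ = A⁻¹ * ∫⁻ y in B, η ^ (-s y) ∂μ := by
        rw [lintegral_indicator hB, lintegral_const_mul' _ _ (ENNReal.inv_ne_top.2 hA0)]
    _ ≤ A⁻¹ * A := by gcongr
    _ = 1 := ENNReal.inv_mul_cancel hA0 hA_top

lemma luxNorm_indicator_one_le_measure_rpow (hB : MeasurableSet B) (hB0 : μ B ≠ 0)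
    (hB1 : μ B ≤ 1) (hs : ∀ᵐ y ∂μ, 1 ≤ s y) {v : ℝ} (hv : ∀ᵐ y ∂μ.restrict B, v ≤ (s y)⁻¹) :
    luxNorm μ s (B.indicator fun _ => (1 : ℝ)) ≤ μ B ^ v := by
  have hB_top : μ B ≠ ⊤ := (hB1.trans_lt one_lt_top).ne
  rw [← one_mul (μ B ^ v)]
  refine luxNorm_indicator_one_le_mul hB le_rfl one_ne_top
    (ENNReal.rpow_pos hB0.bot_lt hB_top).ne' (ENNReal.rpow_ne_top_of_ne_zero hB0 hB_top) hs ?_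
  calc ∫⁻ y in B, (μ B ^ v) ^ (-s y) ∂μ ≤ ∫⁻ _ in B, (μ B)⁻¹ ∂μ := by
        refine lintegral_mono_ae ?_
        filter_upwards [hv, ae_restrict_of_ae hs] with y hvy hsy
        rw [← ENNReal.rpow_mul, ← ENNReal.rpow_neg_one (μ B)]
        refine ENNReal.rpow_le_rpow_of_exponent_ge hB1 ?_
        have : v * s y ≤ 1 := by rwa [← le_div_iff₀ (zero_lt_one.trans_le hsy), one_div]
        linarith
    _ = 1 := by rw [setLIntegral_const, ENNReal.inv_mul_cancel hB0 hB_top]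

lemma exists_luxNorm_indicator_one_le_mul_measure_rpow [BorelSpace (Fin n → ℚ_[p])]
    [μ.IsAddLeftInvariant] [IsFiniteMeasureOnCompacts μ] {v C : ℝ} (hv : 0 ≤ v) (hC : 0 < C)
    (hs : ∀ᵐ y ∂μ, 1 ≤ s y)
    (hlog : ∀ᵐ y ∂μ, (s y)⁻¹ ≤ v + C / Real.logb p (p + ‖y‖)) :
    ∃ A : ℝ≥0∞, A ≠ ⊤ ∧ ∀ B, MeasurableSet B → 1 ≤ μ B → μ B ≠ ⊤ →
      luxNorm μ s (B.indicator fun _ => (1 : ℝ)) ≤ A * μ B ^ v := by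
  have hp : (1 : ℝ) < p := by exact_mod_cast (Fact.out : p.Prime).one_lt
  set r : ℝ := n + 1
  set K : ℝ≥0∞ := ENNReal.ofReal ((p : ℝ) ^ (C * r))
  set H : ℝ≥0∞ := ∫⁻ y, ENNReal.ofReal ((1 + ‖y‖) ^ (-r)) ∂μ
  have hK : K ≠ 0 := (ENNReal.ofReal_pos.2 (by positivity)).ne'
  have hH : H ≠ ⊤ := (lintegral_one_add_norm_rpow_neg_lt_top μ (lt_add_one (n : ℝ))).ne
  have hpointwise {b : ℝ≥0∞} (hb : 1 ≤ b) : ∀ᵐ y ∂μ,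
      (K * b ^ v) ^ (-s y) ≤ b⁻¹ + ENNReal.ofReal ((1 + ‖y‖) ^ (-r)) := by
    filter_upwards [hs, hlog] with y hsy hlogy
    calc (K * b ^ v) ^ (-s y) ≤ b⁻¹ + ENNReal.ofReal ((p + ‖y‖) ^ (-r)) :=
          ofReal_mul_rpow_rpow_neg_le_inv_add hp hC (by positivity)
            (by linarith [norm_nonneg y]) hb (zero_lt_one.trans_le hsy) hv hlogy
      _ ≤ b⁻¹ + ENNReal.ofReal ((1 + ‖y‖) ^ (-r)) := by
          gcongr _ + ENNReal.ofReal ?_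
          exact Real.rpow_le_rpow_of_nonpos (by positivity) (by gcongr)
            (neg_nonpos.2 (by positivity))
  refine ⟨(1 + H) * K, ENNReal.mul_ne_top (by simp [hH]) ENNReal.ofReal_ne_top,
    fun B hB hB1 hB_top => ?_⟩
  have hB0 : μ B ≠ 0 := (zero_lt_one.trans_le hB1).ne'
  rw [mul_assoc]
  refine luxNorm_indicator_one_le_mul hB le_self_add (by simp [hH])
    (mul_ne_zero hK (ENNReal.rpow_pos hB0.bot_lt hB_top).ne')
    (ENNReal.mul_ne_top ENNReal.ofReal_ne_top (ENNReal.rpow_ne_top_of_ne_zero hB0 hB_top)) hs ?_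
  calc ∫⁻ y in B, (K * μ B ^ v) ^ (-s y) ∂μ
      ≤ ∫⁻ y in B, ((μ B)⁻¹ + ENNReal.ofReal ((1 + ‖y‖) ^ (-r))) ∂μ :=
        lintegral_mono_ae (ae_restrict_of_ae (hpointwise hB1))
    _ = 1 + ∫⁻ y in B, ENNReal.ofReal ((1 + ‖y‖) ^ (-r)) ∂μ := by
        rw [lintegral_add_left measurable_const, setLIntegral_const,
          ENNReal.inv_mul_cancel hB0 hB_top]
    _ ≤ 1 + H := add_le_add_right (setLIntegral_le_lintegral _ _) _

end LuxemburgNorm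

section LogHolder

variable {μ : Measure (Fin n → ℚ_[p])} {q q' : (Fin n → ℚ_[p]) → ℝ}

namespace IsLogHolder

lemma exists_abs_inv_sub_le (hq : IsLogHolder μ q) :
    ∃ C : ℝ, 0 < C ∧ ∃ v ∈ Set.Icc (0 : ℝ) 1, ∀ y,
      |(q y)⁻¹ - v| ≤ C / Real.logb p (p + ‖y‖) := by
  obtain ⟨-, hq1, C, hC, -, hdecay⟩ := hq
  have hp : (1 : ℝ) < p := by exact_mod_cast (Fact.out : p.Prime).one_lt
  have hlog {t : ℝ} (ht : 0 ≤ t) : 0 < Real.logb p (p + t) := Real.logb_pos hp (by linarith)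
  refine ⟨C + 1, by positivity, exists_mem_Icc_forall_abs_sub_le zero_le_one
    (fun y => ⟨inv_nonneg.2 (zero_le_one.trans (hq1 y)), inv_le_one_of_one_le₀ (hq1 y)⟩)
    fun x y => ?_⟩
  have hx := hlog (norm_nonneg x)
  have hy := hlog (norm_nonneg y)
  calc |(q x)⁻¹ - (q y)⁻¹| ≤ |q x - q y| := abs_inv_sub_inv_le_abs_sub (hq1 x) (hq1 y)
    _ ≤ C / Real.logb p (p + min ‖x‖ ‖y‖) := hdecay x y
    _ ≤ (C + 1) / Real.logb p (p + min ‖x‖ ‖y‖) := by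
        have := hlog (le_min (norm_nonneg x) (norm_nonneg y))
        gcongr
        linarith
    _ ≤ (C + 1) / Real.logb p (p + ‖x‖) + (C + 1) / Real.logb p (p + ‖y‖) := by
        rcases min_cases ‖x‖ ‖y‖ with ⟨hmin, -⟩ | ⟨hmin, -⟩ <;> rw [hmin]
        · exact le_add_of_nonneg_right (by positivity)
        · exact le_add_of_nonneg_left (by positivity)

lemma exists_forall_le (hq : IsLogHolder μ q) : ∃ M, ∀ y, q y ≤ M := by
  obtain ⟨-, -, C, -, -, hdecay⟩ := hq
  have hp : (1 : ℝ) < p := by exact_mod_cast (Fact.out : p.Prime).one_lt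
  refine ⟨q 0 + C, fun y => ?_⟩
  have h := hdecay y 0
  rw [norm_zero, min_eq_right (norm_nonneg y), add_zero, Real.logb_self_eq_one hp, div_one] at h
  linarith [le_abs_self (q y - q 0)]

lemma exists_inv_mem_Icc_pBall [μ.IsOpenPosMeasure] (hq : IsLogHolder μ q) :
    ∃ C : ℝ, 0 ≤ C ∧ ∀ (γ : ℤ) (x : Fin n → ℚ_[p]), ∃ a b, 0 ≤ a ∧ a ≤ b ∧ b ≤ 1 ∧
      (∀ᵐ y ∂μ.restrict (pBall x γ), (q y)⁻¹ ∈ Set.Icc a b) ∧ γ * (a - b) ≤ C := by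
  obtain ⟨M, hM⟩ := hq.exists_forall_le
  obtain ⟨-, hq1, C, hC, hlocal, -⟩ := hq
  refine ⟨C, hC, fun γ x => ?_⟩
  set ν := μ.restrict (pBall x γ)
  have : NeZero ν := ⟨mt Measure.restrict_eq_zero.1 (measure_pBall_ne_zero μ x γ)⟩
  have hbelow : Filter.IsBoundedUnder (· ≥ ·) (ae ν) q := Filter.isBoundedUnder_of ⟨1, hq1⟩
  have habove : Filter.IsBoundedUnder (· ≤ ·) (ae ν) q := Filter.isBoundedUnder_of ⟨M, hM⟩
  have hmem : ∀ᵐ y ∂ν, q y ∈ Set.Icc (essInf q ν) (essSup q ν) :=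
    (ae_essInf_le hbelow).and (ae_le_essSup habove)
  have hinf : 1 ≤ essInf q ν :=
    Filter.le_liminf_of_le habove.isCoboundedUnder_ge (.of_forall hq1)
  have hle : essInf q ν ≤ essSup q ν := let ⟨_, hy⟩ := hmem.exists; hy.1.trans hy.2
  have hinf_pos : 0 < essInf q ν := zero_lt_one.trans_le hinf
  have hsup_pos : 0 < essSup q ν := hinf_pos.trans_le hle
  refine ⟨(essSup q ν)⁻¹, (essInf q ν)⁻¹, by positivity, by gcongr, inv_le_one_of_one_le₀ hinf,
    hmem.mono fun y hy => ⟨inv_anti₀ (hinf_pos.trans_le hy.1) hy.2, inv_anti₀ hinf_pos hy.1⟩, ?_⟩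
  calc γ * ((essSup q ν)⁻¹ - (essInf q ν)⁻¹)
      = γ * (essInf q ν - essSup q ν) / (essSup q ν * essInf q ν) := by
        rw [inv_sub_inv hsup_pos.ne' hinf_pos.ne', mul_div_assoc]
    _ ≤ C / (essSup q ν * essInf q ν) := by gcongr; exact hlocal γ x
    _ ≤ C := div_le_self hC (one_le_mul_of_one_le_of_one_le (hinf.trans hle) hinf)

lemma exists_luxNorm_mul_luxNorm_le_of_measure_pBall_le_one [BorelSpace (Fin n → ℚ_[p])]
    [μ.IsAddHaarMeasure] (hq : IsLogHolder μ q)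
    (hqq' : ∀ᵐ y ∂μ, (q y).HolderConjugate (q' y)) :
    ∃ A : ℝ≥0∞, A ≠ ⊤ ∧ ∀ (γ : ℤ) (x : Fin n → ℚ_[p]), μ (pBall x γ) ≤ 1 →
      (μ (pBall x γ))⁻¹ * luxNorm μ q ((pBall x γ).indicator fun _ => (1 : ℝ)) *
        luxNorm μ q' ((pBall x γ).indicator fun _ => (1 : ℝ)) ≤ A := by
  obtain ⟨C, hC, hlocal⟩ := hq.exists_inv_mem_Icc_pBall
  have hc := measure_pBall_ne_zero μ (0 : Fin n → ℚ_[p]) 0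
  refine ⟨((p : ℝ≥0∞) ^ n) ^ C * (1 + (μ (pBall 0 0))⁻¹),
    ENNReal.mul_ne_top (ENNReal.rpow_ne_top_of_nonneg hC (by simp)) (by simp [hc]),
    fun γ x hB => ?_⟩
  obtain ⟨a, b, ha, hab, hb, hmem, hγ⟩ := hlocal γ x
  have hB0 := measure_pBall_ne_zero μ x γ
  have hB_top := measure_pBall_ne_top μ x γ
  have hnorm : luxNorm μ q ((pBall x γ).indicator fun _ => (1 : ℝ)) ≤ μ (pBall x γ) ^ a :=
    luxNorm_indicator_one_le_measure_rpow (measurableSet_pBall x γ) hB0 hB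
      (hqq'.mono fun y hy => hy.lt.le) (hmem.mono fun y hy => hy.1)
  have hnorm' : luxNorm μ q' ((pBall x γ).indicator fun _ => (1 : ℝ)) ≤
      μ (pBall x γ) ^ (1 - b) := by
    refine luxNorm_indicator_one_le_measure_rpow (measurableSet_pBall x γ) hB0 hB
      (hqq'.mono fun y hy => hy.symm.lt.le) ?_
    filter_upwards [hmem, ae_restrict_of_ae hqq'] with y hy hconj
    linarith [hconj.one_sub_inv, hy.2]
  calc (μ (pBall x γ))⁻¹ * luxNorm μ q ((pBall x γ).indicator fun _ => (1 : ℝ)) *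
        luxNorm μ q' ((pBall x γ).indicator fun _ => (1 : ℝ))
      ≤ (μ (pBall x γ))⁻¹ * μ (pBall x γ) ^ a * μ (pBall x γ) ^ (1 - b) := by gcongr
    _ = μ (pBall x γ) ^ (-(b - a)) := by
        rw [← ENNReal.rpow_neg_one, ← ENNReal.rpow_add _ _ hB0 hB_top,
          ← ENNReal.rpow_add _ _ hB0 hB_top]
        congr 1
        ring
    _ ≤ ((p : ℝ≥0∞) ^ n) ^ C * (1 + (μ (pBall 0 0))⁻¹) :=
        measure_pBall_rpow_neg_le μ x γ ⟨by linarith, by linarith⟩ hC (by linarith)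

lemma exists_luxNorm_mul_luxNorm_le_of_one_le_measure [BorelSpace (Fin n → ℚ_[p])]
    [μ.IsAddLeftInvariant] [IsFiniteMeasureOnCompacts μ] (hq : IsLogHolder μ q)
    (hqq' : ∀ᵐ y ∂μ, (q y).HolderConjugate (q' y)) :
    ∃ A : ℝ≥0∞, A ≠ ⊤ ∧ ∀ B, MeasurableSet B → 1 ≤ μ B → μ B ≠ ⊤ →
      (μ B)⁻¹ * luxNorm μ q (B.indicator fun _ => (1 : ℝ)) *
        luxNorm μ q' (B.indicator fun _ => (1 : ℝ)) ≤ A := by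
  obtain ⟨C, hC, v, ⟨hv0, hv1⟩, hv⟩ := hq.exists_abs_inv_sub_le
  obtain ⟨A, hA, hnorm⟩ := exists_luxNorm_indicator_one_le_mul_measure_rpow hv0 hC
    (hqq'.mono fun y hy => hy.lt.le) (.of_forall fun y => by linarith [(abs_le.1 (hv y)).2])
  obtain ⟨A', hA', hnorm'⟩ := exists_luxNorm_indicator_one_le_mul_measure_rpow
    (sub_nonneg.2 hv1) hC (hqq'.mono fun y hy => hy.symm.lt.le)
    (hqq'.mono fun y hy => by linarith [(abs_le.1 (hv y)).1, hy.one_sub_inv])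
  refine ⟨A * A', ENNReal.mul_ne_top hA hA', fun B hB hB1 hB_top => ?_⟩
  have hB0 : μ B ≠ 0 := (zero_lt_one.trans_le hB1).ne'
  calc (μ B)⁻¹ * luxNorm μ q (B.indicator fun _ => (1 : ℝ)) *
        luxNorm μ q' (B.indicator fun _ => (1 : ℝ))
      ≤ (μ B)⁻¹ * (A * μ B ^ v) * (A' * μ B ^ (1 - v)) := by
        gcongr
        · exact hnorm B hB hB1 hB_top
        · exact hnorm' B hB hB1 hB_top
    _ = A * A' * ((μ B)⁻¹ * (μ B ^ v * μ B ^ (1 - v))) := by ring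
    _ = A * A' := by
        rw [← ENNReal.rpow_add _ _ hB0 hB_top, add_sub_cancel, ENNReal.rpow_one,
          ENNReal.inv_mul_cancel hB0 hB_top, mul_one]

end IsLogHolder

lemma IsPExp.ae_one_lt (hq : IsPExp μ q) : ∀ᵐ y ∂μ, 1 < q y := by
  obtain ⟨-, hq1, hinf, -⟩ := hq
  filter_upwards [ae_essInf_le (Filter.isBoundedUnder_of ⟨1, hq1⟩)] with y hy
  exact hinf.trans_le hy

end LogHolder

theorem luxNorm_indicator_mul_conjugate_le_general [BorelSpace (Fin n → ℚ_[p])]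
    (μ : Measure (Fin n → ℚ_[p])) [μ.IsAddHaarMeasure] (q q' : (Fin n → ℚ_[p]) → ℝ)
    (hq : IsLogHolder μ q) (hqq' : ∀ᵐ x ∂μ, (q x).HolderConjugate (q' x)) :
    ∃ C : ℝ, 0 < C ∧ ∀ (γ : ℤ) (x : (Fin n → ℚ_[p])),
      (μ (pBall x γ))⁻¹ *
        luxNorm μ q (Set.indicator (pBall x γ) (fun _ => (1 : ℝ))) *
        luxNorm μ q' (Set.indicator (pBall x γ) (fun _ => (1 : ℝ))) ≤ ENNReal.ofReal C := by
  obtain ⟨A₁, hA₁, hsmall⟩ := hq.exists_luxNorm_mul_luxNorm_le_of_measure_pBall_le_one hqq'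
  obtain ⟨A₂, hA₂, hlarge⟩ := hq.exists_luxNorm_mul_luxNorm_le_of_one_le_measure hqq'
  refine ⟨(1 + max A₁ A₂).toReal, ENNReal.toReal_pos (by simp) (by simp [hA₁, hA₂]),
    fun γ x => ?_⟩
  rw [ENNReal.ofReal_toReal (by simp [hA₁, hA₂])]
  refine le_add_of_le_right ?_
  rcases le_total (μ (pBall x γ)) 1 with h | h
  · exact le_max_of_le_left (hsmall γ x h)
  · exact le_max_of_le_right
      (hlarge _ (measurableSet_pBall x γ) h (measure_pBall_ne_top μ x γ))

theorem luxNorm_indicator_mul_conjugate_le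
    (hn : 0 < n) [BorelSpace (Fin n → ℚ_[p])]
    (μ : Measure (Fin n → ℚ_[p])) [μ.IsAddHaarMeasure]
    (hμ : μ (Metric.closedBall 0 1) = 1)
    (q q' : (Fin n → ℚ_[p]) → ℝ) (hqlog : IsLogHolder μ q) (hqP : IsPExp μ q)
    (hq' : ∀ x, 1 / q x + 1 / q' x = 1) :
    ∃ C : ℝ, 0 < C ∧ ∀ (γ : ℤ) (x : (Fin n → ℚ_[p])),
      (μ (pBall x γ))⁻¹ *
        luxNorm μ q (Set.indicator (pBall x γ) (fun _ => (1 : ℝ))) *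
        luxNorm μ q' (Set.indicator (pBall x γ) (fun _ => (1 : ℝ))) ≤ ENNReal.ofReal C := by
  exact luxNorm_indicator_mul_conjugate_le_general μ q q' hqlog <| hqP.ae_one_lt.mono fun x hx =>
    Real.holderConjugate_iff.2 ⟨hx, by simpa only [one_div] using hq' x⟩

end
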